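/- Let B = 𝔽₂[[y₁,y₂,y₃,y₄]]/(y₁y₃ + y₂y₄), a complete local ring with maximal ideal 𝔪 and residue field 𝔽₂. Then the socle of the local cohomology module H²_{(y₁,y₂)}(B), i.e. the 𝔽₂-vector space {u ∈ H²_{(y₁,y₂)}(B) : 𝔪·u = 0}, is infinite dimensional over 𝔽₂. -/

import Mathlib

/-!
Write `x, y, u, v` for the images of the four variables in `B`, so that `x u = - y v`. In the Čech
description of `H²_{(x,y)}(B)` the fractions `s_n = u^n / (x y^(n+1))`, `n ≥ 0`, are killed by all
variables. Indeed a fraction vanishes once `x` or `y` disappears from its denominator, which is clear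
for `x s_n`; expanding by a power of `x` and using `x u = - y v`, one finds that `y s_n` and `u s_n`
have a denominator free of `y`, and `v s_n = - u^(n+1) / y^(n+2)` has one free of `x`. The `s_n` are
pairwise distinct, so the socle is infinite. As the residue field is finite, a finitely generated
socle would be a finite set.

Local cohomology is defined here as the colimit of `Ext²(B/J^t, B)`, so each `s_n` is realised as an
`Ext` class. The element `c = y^(n+1)` is regular, and for `t = 2n + 4` there is a homomorphism
`h : J^t → B/c`, `x a + y^(n+2) b ↦ u^n a`. It is well defined because `x a + y^(n+2) b = 0` forces
`y^(n+1) ∣ a` (`Hartshorne.syz`). The connecting maps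
`Hom(J^t, B/c) → Ext¹(B/J^t, B/c) → Ext²(B/J^t, B)` send `h` to the desired class; they are computed
by an explicit zig-zag on a projective resolution (`ExtRep.Conn`).

* A scalar `r` kills the class if `r h` lifts to a homomorphism `J^t → B`
  (`ExtRep.IsConn.smul_eq_zero`), and `Hartshorne.exists_g` provides such lifts for all variables.
* If `s_n = s_m`, the classes agree at some stage `T` of the colimit. Evaluating cocycles on the
  Koszul cycle of `x^T, y^T` (`ExtRep.IsConn.mem_of_eq`) gives
  `u^n x^(T-1) y^(T-n-1) ≡ u^m x^(T-1) y^(T-m-1)` modulo `(x^T, y^T)`. A sum of coefficients that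
  vanishes on `(x^T, y^T, x u + y v)` but separates the two monomials excludes this for `n ≠ m`
  (`Hartshorne.not_mem`).
-/

/-!
STATEMENT 12: Let `B = 𝔽₂[[y₁,y₂,y₃,y₄]]/(y₁y₃ + y₂y₄)`, a local ring with maximal ideal `𝔪`
and residue field `𝔽₂`.  The socle `{u ∈ H²_{(y₁,y₂)}(B) : 𝔪 u = 0}` is infinite dimensional
over `𝔽₂`.  Since the socle is killed by `𝔪`, being infinite dimensional over the residue
field is expressed as: the socle is not a finitely generated `B`-module.  As `B` is local,
`𝔪` is its unique maximal ideal, so we quantify over all maximal ideals of `B`.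
Variables are 0-indexed: `yⱼ₊₁ = X j`.
-/

noncomputable section

/-- The power series ring `𝔽₂[[y₁,y₂,y₃,y₄]]`. -/
abbrev P : Type := MvPowerSeries (Fin 4) (ZMod 2)

/-- `y j` is the variable `yⱼ₊₁`. -/
def y (j : Fin 4) : P := MvPowerSeries.X j

/-- `B = 𝔽₂[[y₁,y₂,y₃,y₄]]/(y₁y₃ + y₂y₄)`, Hartshorne's example. -/
abbrev B : Type := P ⧸ Ideal.span {y 0 * y 2 + y 1 * y 3}

/-- The ideal `(y₁, y₂)` of `B`. -/
def J : Ideal B :=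
  Ideal.span {Ideal.Quotient.mk (Ideal.span {y 0 * y 2 + y 1 * y 3}) (y 0),
              Ideal.Quotient.mk (Ideal.span {y 0 * y 2 + y 1 * y 3}) (y 1)}

/-- `H²_{(y₁,y₂)}(B)`. -/
def M : ModuleCat B := (localCohomology J 2).obj (ModuleCat.of B B)

open CategoryTheory Limits

namespace ExtRep

/-! ### Representing classes in `Ext²` by cocycles on a projective resolution -/

universe u
variable {R : Type u} [CommRing R]

lemma homologyUnop_naturality {V ι : Type*} [Category V] [HasZeroMorphisms V]
    {c : ComplexShape ι} {K L : HomologicalComplex Vᵒᵖ c} (φ : K ⟶ L) (i : ι)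
    [K.HasHomology i] [L.HasHomology i] :
    HomologicalComplex.homologyMap ((HomologicalComplex.unopFunctor V c).map φ.op) i ≫
      (HomologicalComplex.homologyUnop K i).hom =
    (HomologicalComplex.homologyUnop L i).hom ≫ (HomologicalComplex.homologyMap φ i).unop := by
  have h2 := HomologicalComplex.homologyOp_hom_naturality
    ((HomologicalComplex.unopFunctor V c).map φ.op) i
  have h3 := congrArg Quiver.Hom.unop h2
  exact h3.symm

/-- The cochain map `Hom(P, N) ⟶ Hom(P', N)` induced by a chain map `P' ⟶ P`. -/
abbrev yMap {X X' : ModuleCat.{u} R} {P' : ProjectiveResolution X'} {P : ProjectiveResolution X}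
    (g : P'.complex ⟶ P.complex) (N : ModuleCat.{u} R) :
    P.complex.linearYonedaObj R N ⟶ P'.complex.linearYonedaObj R N :=
  (HomologicalComplex.unopFunctor _ _).map
    ((((linearYoneda R (ModuleCat.{u} R)).obj N).rightOp.mapHomologicalComplex _).map g).op

/-- The purely formal part of `isoExt_naturality`: rewriting a square between opposite objects. -/
lemma iso_aux {V : Type*} [Category V] {A A' H H' : Vᵒᵖ} {U U' : V} (a : A ≅ H) (a' : A' ≅ H')
    (h : U ≅ H.unop) (h' : U' ≅ H'.unop) (m : H' ⟶ H) (k : U ⟶ U')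
    (hk : k ≫ h'.hom = h.hom ≫ m.unop) :
    (a'.hom ≫ m ≫ a.inv).unop ≫ (a'.unop.symm ≪≫ h'.symm).hom =
      (a.unop.symm ≪≫ h.symm).hom ≫ k := by
  have : k = h.hom ≫ m.unop ≫ h'.inv := by
    rw [← Category.assoc, ← hk, Category.assoc, Iso.hom_inv_id, Category.comp_id]
  subst this
  rw [← cancel_epi a.hom.unop]
  simp only [unop_comp, Iso.trans_hom, Iso.symm_hom, Iso.unop_inv, Category.assoc]
  rw [← unop_comp_assoc, ← unop_comp_assoc, ← unop_comp_assoc]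
  simp

/-- Contravariant functoriality of `Ext` is computed by precomposition with a chain map of
resolutions lifting the given morphism. -/
lemma isoExt_naturality {X X' N : ModuleCat.{u} R} (f : X' ⟶ X)
    (P' : ProjectiveResolution X') (P : ProjectiveResolution X) (g : P'.complex ⟶ P.complex)
    (w : g ≫ P.π = P'.π ≫ (ChainComplex.single₀ _).map f) (n : ℕ) :
    ((Ext R (ModuleCat.{u} R) n).map f.op).app N ≫ (P'.isoExt n N).hom =
      (P.isoExt n N).hom ≫ HomologicalComplex.homologyMap (yMap g N) n := by
  have h1 : ((Ext R (ModuleCat.{u} R) n).map f.op).app N =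
    (((((linearYoneda R (ModuleCat.{u} R)).obj N).rightOp).leftDerived n).map f).unop := rfl
  rw [h1, Functor.leftDerived_map_eq _ n f g w]
  exact iso_aux _ _ _ _ _ _ (homologyUnop_naturality
    ((((linearYoneda R (ModuleCat.{u} R)).obj N).rightOp.mapHomologicalComplex _).map g) n)

variable {X X' N : ModuleCat.{u} R}

/-- The class `e ∈ Ext²(X, N)` is represented by the `2`-cocycle `φ : P₂ ⟶ N` of the complex
`Hom(P, N)`, where `P` is a projective resolution of `X`. The cocycle condition is part of the
definition, since `φ` has to come from an element `z` of the cycles. -/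
def Rep (P : ProjectiveResolution X) (φ : P.complex.X 2 ⟶ N)
    (e : ((Ext R (ModuleCat.{u} R) 2).obj (Opposite.op X)).obj N) : Prop :=
  ∃ z : ((P.complex.linearYonedaObj R N).cycles 2 : ModuleCat.{u} R),
    ((P.complex.linearYonedaObj R N).iCycles 2).hom z = φ ∧
    ((P.complex.linearYonedaObj R N).homologyπ 2).hom z = (P.isoExt 2 N).hom.hom e

lemma Rep.smul {P : ProjectiveResolution X} {φ : P.complex.X 2 ⟶ N} {e} (h : Rep P φ e) (r : R) :
    Rep P (r • φ) (r • e) := by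
  obtain ⟨z, h1, h2⟩ := h
  exact ⟨r • z, by rw [map_smul, h1]; rfl, by rw [map_smul, map_smul, h2]⟩

lemma Rep.sub {P : ProjectiveResolution X} {φ φ' : P.complex.X 2 ⟶ N} {e e'}
    (h : Rep P φ e) (h' : Rep P φ' e') : Rep P (φ - φ') (e - e') := by
  obtain ⟨z, h1, h2⟩ := h
  obtain ⟨z', h1', h2'⟩ := h'
  exact ⟨z - z', by rw [map_sub, h1, h1']; rfl, by rw [map_sub, map_sub, h2, h2']⟩

lemma Rep.map {P' : ProjectiveResolution X'} {P : ProjectiveResolution X}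
    {φ : P.complex.X 2 ⟶ N} {e} (h : Rep P φ e) (f : X' ⟶ X) (g : P'.complex ⟶ P.complex)
    (w : g ≫ P.π = P'.π ≫ (ChainComplex.single₀ _).map f) :
    Rep P' (g.f 2 ≫ φ) ((((Ext R (ModuleCat.{u} R) 2).map f.op).app N).hom e) := by
  obtain ⟨z, h1, h2⟩ := h
  refine ⟨(HomologicalComplex.cyclesMap (yMap g N) 2).hom z, ?_, ?_⟩
  · have := congrArg (fun k => k.hom z) (HomologicalComplex.cyclesMap_i (yMap g N) 2)
    refine this.trans ?_
    subst h1
    rfl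
  · have := congrArg (fun k => k.hom z) (HomologicalComplex.homologyπ_naturality (yMap g N) 2)
    refine this.symm.trans ?_
    have h3 := congrArg (fun k => k.hom e) (isoExt_naturality (N := N) f P' P g w 2)
    refine Eq.trans ?_ h3.symm
    exact congrArg (HomologicalComplex.homologyMap (yMap g N) 2).hom h2

lemma exists_cycle (K : CochainComplex (ModuleCat.{u} R) ℕ) (x : K.X 2)
    (hx : (K.d 2 3).hom x = 0) : ∃ z, (K.iCycles 2).hom z = x := by
  have hex := ShortComplex.exact_of_f_is_kernel
    (ShortComplex.mk (K.iCycles 2) (K.d 2 3) (by simp)) (K.cyclesIsKernel 2 3 (by simp))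
  exact (ShortComplex.moduleCat_exact_iff _).1 hex x hx

lemma exists_boundary (K : CochainComplex (ModuleCat.{u} R) ℕ) (z : K.cycles 2)
    (hz : (K.homologyπ 2).hom z = 0) : ∃ x, (K.d 1 2).hom x = (K.iCycles 2).hom z := by
  have hex := ShortComplex.exact_of_g_is_cokernel
    (ShortComplex.mk (K.toCycles 1 2) (K.homologyπ 2) (by simp))
    (K.homologyIsCokernel 1 2 (by simp))
  obtain ⟨x, hx⟩ := (ShortComplex.moduleCat_exact_iff _).1 hex z hz
  refine ⟨x, ?_⟩
  have hx' : (K.toCycles 1 2).hom x = z := hx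
  rw [← hx', ← K.toCycles_i 1 2]
  rfl

lemma boundary_zero (K : CochainComplex (ModuleCat.{u} R) ℕ) (z : K.cycles 2)
    (x : K.X 1) (h : (K.d 1 2).hom x = (K.iCycles 2).hom z) : (K.homologyπ 2).hom z = 0 := by
  have hz : z = (K.toCycles 1 2).hom x := by
    have hm := (ModuleCat.mono_iff_injective (K.iCycles 2)).1 inferInstance
    apply hm
    rw [← K.toCycles_i 1 2] at h
    exact h.symm
  have := congrArg (fun k => k.hom x) (K.toCycles_comp_homologyπ 1 2)
  rw [hz]
  exact this

lemma exists_rep (P : ProjectiveResolution X) (φ : P.complex.X 2 ⟶ N)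
    (h : P.complex.d 3 2 ≫ φ = 0) : ∃ e, Rep P φ e := by
  obtain ⟨z, hz⟩ := exists_cycle (P.complex.linearYonedaObj R N) φ h
  refine ⟨(P.isoExt 2 N).inv.hom (((P.complex.linearYonedaObj R N).homologyπ 2).hom z), z, hz, ?_⟩
  exact (congrArg (fun k => k.hom (((P.complex.linearYonedaObj R N).homologyπ 2).hom z))
    (P.isoExt (R := R) 2 N).inv_hom_id).symm

lemma Rep.exists_of_zero {P : ProjectiveResolution X} {φ : P.complex.X 2 ⟶ N} (h : Rep P φ 0) :
    ∃ ψ : P.complex.X 1 ⟶ N, φ = P.complex.d 2 1 ≫ ψ := by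
  obtain ⟨z, rfl, h2⟩ := h
  rw [map_zero] at h2
  obtain ⟨x, hx⟩ := exists_boundary _ z h2
  exact ⟨x, hx.symm⟩

lemma Rep.eq_zero {P : ProjectiveResolution X} {φ : P.complex.X 2 ⟶ N} {e} (h : Rep P φ e)
    (ψ : P.complex.X 1 ⟶ N) (hψ : φ = P.complex.d 2 1 ≫ ψ) : e = 0 := by
  obtain ⟨z, rfl, h2⟩ := h
  have h0 := boundary_zero _ z ψ hψ.symm
  have hi := (ModuleCat.mono_iff_injective (P.isoExt (R := R) 2 N).hom).1 inferInstance
  apply hi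
  rw [map_zero]
  exact h2.symm.trans h0

/-! ### Equality of classes in the colimit defining local cohomology -/

/-- The projection `R/J^T ⟶ R/J^t` for `t ≤ T`. -/
def tr (J : Ideal R) {t T : ℕ} (h : t ≤ T) :
    ModuleCat.of R (R ⧸ J ^ T) ⟶ ModuleCat.of R (R ⧸ J ^ t) :=
  ModuleCat.ofHom (Submodule.mapQ _ _ LinearMap.id (Ideal.pow_le_pow_right h))

/-- `H²_J(N)` is the filtered colimit of the modules `Ext²(R/J^t, N)`: there are maps `ι t`
into it, and elements with the same image already agree at some later stage. -/
lemma exists_stage_maps {R : Type} [CommRing R] (J : Ideal R) (N : ModuleCat.{0} R) :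
    ∃ ι : ∀ t : ℕ, ((Ext R (ModuleCat.{0} R) 2).obj
        (Opposite.op (ModuleCat.of R (R ⧸ J ^ t)))).obj N →ₗ[R] (localCohomology J 2).obj N,
      ∀ t t' e e', ι t e = ι t' e' → ∃ (T : ℕ) (h : t ≤ T) (h' : t' ≤ T),
        (((Ext R (ModuleCat.{0} R) 2).map (tr J h).op).app N).hom e =
        (((Ext R (ModuleCat.{0} R) 2).map (tr J h').op).app N).hom e' := by
  let F := localCohomology.diagram (localCohomology.idealPowersDiagram J) 2
  have : HasColimit F := localCohomology.hasColimitDiagram.{0, 0} _ _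
  let D := ((evaluation _ _).obj N).mapCocone (colimit.cocone F)
  have hD : IsColimit D := isColimitOfPreserves _ (colimit.isColimit F)
  refine ⟨fun t => (D.ι.app (Opposite.op (Opposite.op t))).hom, fun t t' e e' h => ?_⟩
  obtain ⟨k, f, g, hfg⟩ := Concrete.isColimit_exists_of_rep_eq
    (F ⋙ (evaluation _ _).obj N) hD (i := Opposite.op (Opposite.op t))
    (j := Opposite.op (Opposite.op t')) e e' h
  exact ⟨k.unop.unop, f.unop.unop.down.down, g.unop.unop.down.down, hfg⟩

/-! ### A double connecting homomorphism

For a regular element `c`, the sequences `0 → I → R → R/I → 0` and `0 → R → R → R/c → 0` give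
connecting maps `Hom(I, R/c) → Ext¹(R/I, R/c) → Ext²(R/I, R)`. -/

section Connecting
variable {R : Type*} [CommRing R] {I : Ideal R} {c : R}
  {P₀ P₁ P₂ P₃ : Type*} [AddCommGroup P₀] [Module R P₀] [AddCommGroup P₁] [Module R P₁]
  [AddCommGroup P₂] [Module R P₂] [AddCommGroup P₃] [Module R P₃]

/-- For `P₂ → P₁ → P₀ → R/I` with differentials `d₂`, `d₁` and augmentation `ε`, the map
`φ : P₂ → R` is obtained from `h : I → R/c` by the zig-zag computing the two connecting maps: `p`
lifts `ε` to `R`, `ψ` lifts `h ∘ p ∘ d₁` to `R`, and `c φ = ψ ∘ d₂`. -/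
structure Conn (ε : P₀ →ₗ[R] R ⧸ I) (d₁ : P₁ →ₗ[R] P₀) (d₂ : P₂ →ₗ[R] P₁)
    (h : I →ₗ[R] R ⧸ Ideal.span {c}) (φ : P₂ →ₗ[R] R) where
  p : P₀ →ₗ[R] R
  ψ : P₁ →ₗ[R] R
  mk_p : ∀ x, Ideal.Quotient.mk I (p x) = ε x
  p_mem : ∀ x, p (d₁ x) ∈ I
  mk_ψ : ∀ x, Ideal.Quotient.mk (Ideal.span {c}) (ψ x) = h ⟨p (d₁ x), p_mem x⟩
  mul_φ : ∀ z, c * φ z = ψ (d₂ z)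

lemma exists_conn [Module.Projective R P₀] [Module.Projective R P₁] [Module.Projective R P₂]
    (hc : ∀ a, c * a = 0 → a = 0)
    (ε : P₀ →ₗ[R] R ⧸ I) (d₁ : P₁ →ₗ[R] P₀) (d₂ : P₂ →ₗ[R] P₁) (d₃ : P₃ →ₗ[R] P₂)
    (h₁ : ∀ x, ε (d₁ x) = 0) (h₂ : ∀ x, d₁ (d₂ x) = 0) (h₃ : ∀ x, d₂ (d₃ x) = 0)
    (h : I →ₗ[R] R ⧸ Ideal.span {c}) :
    ∃ φ : P₂ →ₗ[R] R, (∀ x, φ (d₃ x) = 0) ∧ Nonempty (Conn ε d₁ d₂ h φ) := by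
  obtain ⟨p, hp⟩ := Module.projective_lifting_property (Submodule.mkQ I) ε
    (Submodule.mkQ_surjective _)
  have hp' : ∀ x, Ideal.Quotient.mk I (p x) = ε x := fun x => LinearMap.congr_fun hp x
  have pm : ∀ x, p (d₁ x) ∈ I := fun x => by
    rw [← Ideal.Quotient.eq_zero_iff_mem, hp', h₁]
  obtain ⟨ψ, hψ⟩ := Module.projective_lifting_property (Submodule.mkQ (Ideal.span {c}))
    (h ∘ₗ (p ∘ₗ d₁).codRestrict I pm) (Submodule.mkQ_surjective _)
  have hψ' : ∀ x, Ideal.Quotient.mk (Ideal.span {c}) (ψ x) = h ⟨p (d₁ x), pm x⟩ :=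
    fun x => LinearMap.congr_fun hψ x
  have ψm : ∀ x, ψ (d₂ x) ∈ Ideal.span {c} := fun x => by
    rw [← Ideal.Quotient.eq_zero_iff_mem, hψ']
    convert map_zero h
    rw [h₂, map_zero]; rfl
  have hsurj : Function.Surjective
      ((LinearMap.mulLeft R c).codRestrict (Ideal.span {c})
        (fun a => Ideal.mem_span_singleton'.2 ⟨a, mul_comm _ _⟩)) := by
    rintro ⟨b, hb⟩
    obtain ⟨a, rfl⟩ := Ideal.mem_span_singleton'.1 hb
    exact ⟨a, Subtype.ext (mul_comm _ _)⟩
  obtain ⟨φ, hφ⟩ := Module.projective_lifting_property _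
    ((ψ ∘ₗ d₂).codRestrict (Ideal.span {c}) ψm) hsurj
  have hmul : ∀ z, c * φ z = ψ (d₂ z) := fun z => congrArg Subtype.val (LinearMap.congr_fun hφ z)
  exact ⟨φ, fun x => hc _ (by rw [hmul, h₃, map_zero]), ⟨⟨p, ψ, hp', pm, hψ', hmul⟩⟩⟩

/-- If `r • h` lifts to a map `g : I → R`, then `r φ` is a coboundary. -/
lemma Conn.smul_eq_comp [Module.Projective R P₁] (hc : ∀ a, c * a = 0 → a = 0)
    {ε : P₀ →ₗ[R] R ⧸ I} {d₁ : P₁ →ₗ[R] P₀} {d₂ : P₂ →ₗ[R] P₁}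
    (h₂ : ∀ x, d₁ (d₂ x) = 0)
    {h : I →ₗ[R] R ⧸ Ideal.span {c}} {φ : P₂ →ₗ[R] R} (C : Conn ε d₁ d₂ h φ)
    (r : R) (g : I →ₗ[R] R) (hg : ∀ x, r • h x = Ideal.Quotient.mk _ (g x)) :
    ∃ χ : P₁ →ₗ[R] R, ∀ z, r • φ z = χ (d₂ z) := by
  have hm : ∀ x, (r • C.ψ - g ∘ₗ (C.p ∘ₗ d₁).codRestrict I C.p_mem) x ∈ Ideal.span {c} := by
    intro x
    rw [← Ideal.Quotient.eq_zero_iff_mem]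
    have := hg ⟨C.p (d₁ x), C.p_mem x⟩
    rw [← C.mk_ψ] at this
    simp only [LinearMap.sub_apply, map_sub, sub_eq_zero]
    exact this
  have hsurj : Function.Surjective
      ((LinearMap.mulLeft R c).codRestrict (Ideal.span {c})
        (fun a => Ideal.mem_span_singleton'.2 ⟨a, mul_comm _ _⟩)) := by
    rintro ⟨b, hb⟩
    obtain ⟨a, rfl⟩ := Ideal.mem_span_singleton'.1 hb
    exact ⟨a, Subtype.ext (mul_comm _ _)⟩
  obtain ⟨χ, hχ⟩ := Module.projective_lifting_property _
    (LinearMap.codRestrict (Ideal.span {c}) _ hm) hsurj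
  have hχ' : ∀ z, c * χ z = r * C.ψ z - g ⟨C.p (d₁ z), C.p_mem z⟩ :=
    fun z => congrArg Subtype.val (LinearMap.congr_fun hχ z)
  refine ⟨χ, fun z => sub_eq_zero.1 (hc _ ?_)⟩
  have h0 : g ⟨C.p (d₁ (d₂ z)), C.p_mem _⟩ = 0 := by
    convert map_zero g
    rw [h₂, map_zero]; rfl
  rw [mul_sub, hχ', h0, sub_zero, ← C.mul_φ, smul_eq_mul]
  ring

/-- The value of `φ` on the image `q` of the Koszul `2`-cycle on `a, b`, modulo `(a, b)`: with
`b = c b'`, `h(a) = w` and `h(b) = 0`, it is `- w b'`. -/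
lemma Conn.apply_koszul (hc : ∀ a, c * a = 0 → a = 0)
    {ε : P₀ →ₗ[R] R ⧸ I} {d₁ : P₁ →ₗ[R] P₀} {d₂ : P₂ →ₗ[R] P₁}
    {h : I →ₗ[R] R ⧸ Ideal.span {c}} {φ : P₂ →ₗ[R] R} (C : Conn ε d₁ d₂ h φ)
    {a b b' w : R} (ha : a ∈ I) (hb : b ∈ I) (hbc : b = c * b')
    (hha : h ⟨a, ha⟩ = Ideal.Quotient.mk _ w) (hhb : h ⟨b, hb⟩ = 0)
    (hI : ∀ j ∈ I, j * (w * b') ∈ Ideal.span {a, b})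
    {p₀ : P₀} {pa pb : P₁} {q : P₂} (h₀ : ε p₀ = 1) (hpa : d₁ pa = a • p₀) (hpb : d₁ pb = b • p₀)
    (hq : d₂ q = a • pb - b • pa) : φ q + w * b' ∈ Ideal.span {a, b} := by
  obtain ⟨j, hj, hpj⟩ : ∃ j ∈ I, C.p p₀ = 1 + j := by
    refine ⟨C.p p₀ - 1, ?_, by ring⟩
    rw [← Ideal.Quotient.eq_zero_iff_mem, map_sub, C.mk_p, h₀, map_one, sub_self]
  have ea : Ideal.Quotient.mk (Ideal.span {c}) (C.ψ pa) = Ideal.Quotient.mk _ ((1 + j) * w) := by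
    rw [C.mk_ψ]
    have : (⟨C.p (d₁ pa), C.p_mem pa⟩ : I) = (1 + j) • ⟨a, ha⟩ := by
      ext; simp [hpa, hpj, mul_comm]
    rw [this, map_smul, hha]
    rfl
  have eb : Ideal.Quotient.mk (Ideal.span {c}) (C.ψ pb) = 0 := by
    rw [C.mk_ψ]
    have : (⟨C.p (d₁ pb), C.p_mem pb⟩ : I) = (1 + j) • ⟨b, hb⟩ := by
      ext; simp [hpb, hpj, mul_comm]
    rw [this, map_smul, hhb, smul_zero]
  rw [Ideal.Quotient.eq, Ideal.mem_span_singleton'] at ea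
  rw [Ideal.Quotient.eq_zero_iff_mem, Ideal.mem_span_singleton'] at eb
  obtain ⟨c₁, hc₁⟩ := ea
  obtain ⟨c₂, hc₂⟩ := eb
  -- Multiplying by the regular element `c` turns this into the identity `c φ(q) = a ψ(pb) - b ψ(pa)`.
  have key : φ q = a * c₂ - b * c₁ - b' * ((1 + j) * w) := by
    apply sub_eq_zero.1 (hc _ _)
    rw [mul_sub, C.mul_φ, hq, map_sub, map_smul, map_smul, smul_eq_mul, smul_eq_mul, ← hc₂,
      eq_add_of_sub_eq hc₁.symm]
    rw [hbc]
    ring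
  have : φ q + w * b' = c₂ * a + (- c₁) * b - j * (w * b') := by rw [key]; ring
  rw [this]
  exact Ideal.sub_mem _ (Ideal.mem_span_pair.2 ⟨_, _, rfl⟩) (hI j hj)

end Connecting

/-! ### The double connecting homomorphism on projective resolutions -/

section Resolution
variable {R : Type} [CommRing R]

/-- The augmentation `P₀ → X` of a projective resolution, as a linear map. -/
def aug {X : ModuleCat.{0} R} (P : ProjectiveResolution X) : P.complex.X 0 →ₗ[R] X :=
  (P.π.f 0).hom

lemma aug_d {X : ModuleCat.{0} R} (P : ProjectiveResolution X) (z : P.complex.X 1) :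
    aug P ((P.complex.d 1 0).hom z) = 0 :=
  congrArg (fun k => k.hom z) P.complex_d_comp_π_f_zero

lemma d_d {X : ModuleCat.{0} R} (P : ProjectiveResolution X) (i j k : ℕ) (z : P.complex.X i) :
    (P.complex.d j k).hom ((P.complex.d i j).hom z) = 0 :=
  congrArg (fun f => f.hom z) (P.complex.d_comp_d i j k)

lemma aug_surjective {X : ModuleCat.{0} R} (P : ProjectiveResolution X) :
    Function.Surjective (aug P) :=
  (ModuleCat.epi_iff_surjective (P.π.f 0)).1 inferInstance

lemma exists_of_aug {X : ModuleCat.{0} R} (P : ProjectiveResolution X) (z : P.complex.X 0)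
    (hz : aug P z = 0) : ∃ w, (P.complex.d 1 0).hom w = z :=
  (ShortComplex.moduleCat_exact_iff _).1 P.exact₀ z hz

lemma exists_of_d {X : ModuleCat.{0} R} (P : ProjectiveResolution X) (z : P.complex.X 1)
    (hz : (P.complex.d 1 0).hom z = 0) : ∃ w, (P.complex.d 2 1).hom w = z :=
  (ShortComplex.moduleCat_exact_iff _).1 (P.exact_succ 0) z hz

instance {X : ModuleCat.{0} R} (P : ProjectiveResolution X) (n : ℕ) :
    Module.Projective R (P.complex.X n) :=
  (IsProjective.iff_projective (P.complex.X n)).2 (inferInstanceAs (Projective (P.complex.X n)))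

variable (I : Ideal R) {c : R}

/-- The class `e ∈ Ext²(R/I, R)` is the image of `h ∈ Hom(I, R/c)` under the two connecting
maps, as computed on some projective resolution of `R/I`. -/
def IsConn (h : I →ₗ[R] R ⧸ Ideal.span {c})
    (e : ((Ext R (ModuleCat.{0} R) 2).obj (Opposite.op (ModuleCat.of R (R ⧸ I)))).obj
      (ModuleCat.of R R)) : Prop :=
  ∃ (P : ProjectiveResolution (ModuleCat.of R (R ⧸ I)))
    (φ : P.complex.X 2 ⟶ ModuleCat.of R R),
    Nonempty (Conn (aug P) (P.complex.d 1 0).hom (P.complex.d 2 1).hom h φ.hom) ∧ Rep P φ e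

variable {I}

lemma exists_isConn (hc : ∀ a, c * a = 0 → a = 0) (h : I →ₗ[R] R ⧸ Ideal.span {c}) :
    ∃ e, IsConn I h e := by
  obtain ⟨P⟩ := HasProjectiveResolution.out (Z := ModuleCat.of R (R ⧸ I))
  obtain ⟨φ, h₃, hφ⟩ := exists_conn hc (aug P) (P.complex.d 1 0).hom (P.complex.d 2 1).hom
    (P.complex.d 3 2).hom (aug_d P) (d_d P _ _ _) (d_d P _ _ _) h
  obtain ⟨e, he⟩ := exists_rep P (ModuleCat.ofHom φ) (by ext x; exact h₃ x)
  exact ⟨e, P, _, hφ, he⟩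

/-- A multiple `r • e` vanishes as soon as `r • h` lifts to a map `I → R`. -/
lemma IsConn.smul_eq_zero (hc : ∀ a, c * a = 0 → a = 0) {h : I →ₗ[R] R ⧸ Ideal.span {c}} {e}
    (he : IsConn I h e) (r : R) (g : I →ₗ[R] R)
    (hg : ∀ x, r • h x = Ideal.Quotient.mk _ (g x)) : r • e = 0 := by
  obtain ⟨P, φ, ⟨C⟩, hφ⟩ := he
  obtain ⟨χ, hχ⟩ := C.smul_eq_comp hc (d_d P _ _ _) r g hg
  refine (hφ.smul r).eq_zero (ModuleCat.ofHom χ) ?_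
  ext x
  exact hχ x

/-- Comparison of two classes at stage `T`: if they agree in `Ext²(R/J^T, R)`, then so do, modulo
`(a, b)`, their values on the Koszul cycle of any `a, b ∈ J^T`. -/
lemma IsConn.mem_of_eq {J : Ideal R} {t t' T : ℕ} (ht : t ≤ T) (ht' : t' ≤ T) {c c' : R}
    (hc : ∀ a, c * a = 0 → a = 0) (hc' : ∀ a, c' * a = 0 → a = 0)
    {h : ↥(J ^ t) →ₗ[R] R ⧸ Ideal.span {c}} {h' : ↥(J ^ t') →ₗ[R] R ⧸ Ideal.span {c'}} {e e'}
    (he : IsConn (J ^ t) h e) (he' : IsConn (J ^ t') h' e')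
    (hee : (((Ext R (ModuleCat.{0} R) 2).map (tr J ht).op).app _).hom e =
        (((Ext R (ModuleCat.{0} R) 2).map (tr J ht').op).app _).hom e')
    {a b w w' b₁ b₁' : R} (ha : a ∈ J ^ T) (hb : b ∈ J ^ T)
    (hb₁ : b = c * b₁) (hb₁' : b = c' * b₁')
    (hha : h ⟨a, Ideal.pow_le_pow_right ht ha⟩ = Ideal.Quotient.mk _ w)
    (hha' : h' ⟨a, Ideal.pow_le_pow_right ht' ha⟩ = Ideal.Quotient.mk _ w')
    (hhb : h ⟨b, Ideal.pow_le_pow_right ht hb⟩ = 0)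
    (hhb' : h' ⟨b, Ideal.pow_le_pow_right ht' hb⟩ = 0)
    (hI : ∀ j ∈ J ^ t, j * (w * b₁) ∈ Ideal.span {a, b})
    (hI' : ∀ j ∈ J ^ t', j * (w' * b₁') ∈ Ideal.span {a, b}) :
    w * b₁ - w' * b₁' ∈ Ideal.span {a, b} := by
  obtain ⟨P, φ, ⟨C⟩, hφ⟩ := he
  obtain ⟨P', φ', ⟨C'⟩, hφ'⟩ := he'
  obtain ⟨Q⟩ := HasProjectiveResolution.out (Z := ModuleCat.of R (R ⧸ J ^ T))
  let f := ProjectiveResolution.lift (tr J ht) Q P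
  let f' := ProjectiveResolution.lift (tr J ht') Q P'
  have hr := (hφ.map _ f (ProjectiveResolution.lift_commutes _ _ _)).sub
    (hφ'.map _ f' (ProjectiveResolution.lift_commutes _ _ _))
  rw [hee, sub_self] at hr
  obtain ⟨χ, hχ⟩ := hr.exists_of_zero
  obtain ⟨p₀, h₀⟩ := aug_surjective Q (1 : R ⧸ J ^ T)
  have key : ∀ r ∈ J ^ T, aug Q (r • p₀) = 0 := fun r hr => by
    rw [map_smul, h₀, Algebra.smul_def, mul_one]
    exact Ideal.Quotient.eq_zero_iff_mem.2 hr
  obtain ⟨pa, hpa⟩ := exists_of_aug Q _ (key a ha)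
  obtain ⟨pb, hpb⟩ := exists_of_aug Q _ (key b hb)
  obtain ⟨q, hq⟩ := exists_of_d Q (a • pb - b • pa) (by
    rw [map_sub, map_smul, map_smul, hpa, hpb, smul_smul, smul_smul, mul_comm, sub_self])
  have tr_one : ∀ s (hs : s ≤ T), (tr J hs).hom (1 : R ⧸ J ^ T) = (1 : R ⧸ J ^ s) :=
    fun s hs => rfl
  have comm : ∀ {X : ModuleCat.{0} R} {S : ProjectiveResolution X} (k : Q.complex ⟶ S.complex)
      (i j : ℕ) (z : Q.complex.X i), (S.complex.d i j).hom ((k.f i).hom z) =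
        (k.f j).hom ((Q.complex.d i j).hom z) := fun k i j z =>
    congrArg (fun l => l.hom z) (k.comm i j)
  have h1 := C.apply_koszul hc _ _ hb₁ hha hhb hI (p₀ := (f.f 0).hom p₀) (pa := (f.f 1).hom pa)
    (pb := (f.f 1).hom pb) (q := (f.f 2).hom q)
    (by
      have := congrArg (fun l => l.hom p₀) (ProjectiveResolution.lift_commutes_zero (tr J ht) Q P)
      refine this.trans ?_
      exact congrArg (tr J ht).hom h₀)
    (by rw [comm, hpa, map_smul]) (by rw [comm, hpb, map_smul])
    (by rw [comm, hq, map_sub, map_smul, map_smul])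
  have h2 := C'.apply_koszul hc' _ _ hb₁' hha' hhb' hI' (p₀ := (f'.f 0).hom p₀)
    (pa := (f'.f 1).hom pa) (pb := (f'.f 1).hom pb) (q := (f'.f 2).hom q)
    (by
      have := congrArg (fun l => l.hom p₀) (ProjectiveResolution.lift_commutes_zero (tr J ht') Q P')
      refine this.trans ?_
      exact congrArg (tr J ht').hom h₀)
    (by rw [comm, hpa, map_smul]) (by rw [comm, hpb, map_smul])
    (by rw [comm, hq, map_sub, map_smul, map_smul])
  -- The difference of the two cocycles is a coboundary, and `d₂ q = a pb - b pa`.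
  have h3 : φ.hom ((f.f 2).hom q) - φ'.hom ((f'.f 2).hom q) ∈ Ideal.span {a, b} := by
    have : φ.hom ((f.f 2).hom q) - φ'.hom ((f'.f 2).hom q) = χ.hom (a • pb - b • pa) := by
      rw [← hq]
      exact congrArg (fun l => l.hom q) hχ
    rw [this, map_sub, map_smul, map_smul]
    exact Ideal.mem_span_pair.2 ⟨χ.hom pb, - χ.hom pa, by simp only [smul_eq_mul]; ring⟩
  have : w * b₁ - w' * b₁' = (φ.hom ((f.f 2).hom q) + w * b₁) -
      (φ'.hom ((f'.f 2).hom q) + w' * b₁') -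
      (φ.hom ((f.f 2).hom q) - φ'.hom ((f'.f 2).hom q)) := by ring
  rw [this]
  exact Ideal.sub_mem _ (Ideal.sub_mem _ h1 h2) h3

end Resolution

end ExtRep

namespace Hartshorne

/-! ### Monomials and a coefficient functional on the power series ring -/

/-- The exponent `(a, b, c, d)` of a monomial in four variables. -/
def E (a b c d : ℕ) : Fin 4 →₀ ℕ := Finsupp.equivFunOnFinite.symm ![a, b, c, d]

lemma E_le {a b c d a' b' c' d' : ℕ} :
    E a b c d ≤ E a' b' c' d' ↔ a ≤ a' ∧ b ≤ b' ∧ c ≤ c' ∧ d ≤ d' := by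
  simp [E, Finsupp.le_def, Fin.forall_fin_succ]

lemma E_sub {a b c d a' b' c' d' : ℕ} :
    E a b c d - E a' b' c' d' = E (a - a') (b - b') (c - c') (d - d') := by
  ext i; fin_cases i <;> simp [E]

lemma E_add {a b c d a' b' c' d' : ℕ} :
    E a b c d + E a' b' c' d' = E (a + a') (b + b') (c + c') (d + d') := by
  ext i; fin_cases i <;> simp [E]

lemma E_inj {a b c d a' b' c' d' : ℕ} :
    E a b c d = E a' b' c' d' ↔ a = a' ∧ b = b' ∧ c = c' ∧ d = d' := by
  simp [E]

open MvPowerSeries in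
lemma mon_eq (a b c d : ℕ) :
    y 0 ^ a * y 1 ^ b * y 2 ^ c * y 3 ^ d = monomial (E a b c d) (1 : ZMod 2) := by
  simp only [y, X_pow_eq, monomial_mul_monomial, one_mul]
  congr 2
  refine Finsupp.ext fun i => ?_
  fin_cases i <;> simp [E]

open MvPowerSeries in
lemma coeff_mon_mul (a b c d a' b' c' d' : ℕ) (p : P) :
    coeff (E a b c d) (y 0 ^ a' * y 1 ^ b' * y 2 ^ c' * y 3 ^ d' * p) =
      if a' ≤ a ∧ b' ≤ b ∧ c' ≤ c ∧ d' ≤ d then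
        coeff (E (a - a') (b - b') (c - c') (d - d')) p else 0 := by
  rw [mon_eq, coeff_monomial_mul, E_sub, one_mul]
  simp only [E_le]

/-- The sum of the coefficients of `p` at the monomials
`y₁^(T-1-k) y₂^(T-n-1+k) y₃^(n-k) y₄^k`, `0 ≤ k ≤ n`. In characteristic two these are the monomials
congruent to `y₁^(T-1) y₂^(T-n-1) y₃^n` modulo `y₁y₃ + y₂y₄`. -/
def lam (T n : ℕ) (p : P) : ZMod 2 :=
  ∑ k ∈ Finset.range (n + 1), MvPowerSeries.coeff (E (T - 1 - k) (T - n - 1 + k) (n - k) k) p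

lemma lam_add (T n : ℕ) (p q : P) : lam T n (p + q) = lam T n p + lam T n q := by
  simp [lam, Finset.sum_add_distrib]

lemma lam_x (T n : ℕ) (hn : n < T) (p : P) : lam T n (y 0 ^ T * p) = 0 := by
  refine Finset.sum_eq_zero fun k hk => ?_
  have := coeff_mon_mul (T - 1 - k) (T - n - 1 + k) (n - k) k T 0 0 0 p
  simp only [pow_zero, mul_one] at this
  rw [this, if_neg (by omega)]

lemma lam_y (T n : ℕ) (hn : n < T) (p : P) : lam T n (y 1 ^ T * p) = 0 := by
  refine Finset.sum_eq_zero fun k hk => ?_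
  have := coeff_mon_mul (T - 1 - k) (T - n - 1 + k) (n - k) k 0 T 0 0 p
  simp only [pow_zero, mul_one, one_mul] at this
  rw [Finset.mem_range] at hk
  rw [this, if_neg (by omega)]

/-- The coefficients of `y₁y₃p` and `y₂y₄p` cancel after shifting the summation index. -/
lemma lam_f (T n : ℕ) (hn : n < T) (p : P) : lam T n ((y 0 * y 2 + y 1 * y 3) * p) = 0 := by
  rw [add_mul, lam_add]
  have h1 : lam T n (y 0 * y 2 * p) = ∑ k ∈ Finset.range n,
      MvPowerSeries.coeff (E (T - 2 - k) (T - n - 1 + k) (n - 1 - k) k) p := by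
    rw [lam, Finset.sum_range_succ]
    have h0 := coeff_mon_mul (T - 1 - n) (T - n - 1 + n) (n - n) n 1 0 1 0 p
    simp only [pow_zero, mul_one, pow_one] at h0
    rw [h0, if_neg (by omega), add_zero]
    refine Finset.sum_congr rfl fun k hk => ?_
    rw [Finset.mem_range] at hk
    have h0 := coeff_mon_mul (T - 1 - k) (T - n - 1 + k) (n - k) k 1 0 1 0 p
    simp only [pow_zero, mul_one, pow_one] at h0
    rw [h0, if_pos (by omega)]
    congr 2
    rw [E_inj]; omega
  have h2 : lam T n (y 1 * y 3 * p) = ∑ k ∈ Finset.range n,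
      MvPowerSeries.coeff (E (T - 2 - k) (T - n - 1 + k) (n - 1 - k) k) p := by
    rw [lam, Finset.sum_range_succ']
    have h0 := coeff_mon_mul (T - 1 - 0) (T - n - 1 + 0) (n - 0) 0 0 1 0 1 p
    simp only [pow_zero, mul_one, pow_one, one_mul] at h0
    rw [h0, if_neg (by omega), add_zero]
    refine Finset.sum_congr rfl fun k hk => ?_
    rw [Finset.mem_range] at hk
    have h0 := coeff_mon_mul (T - 1 - (k + 1)) (T - n - 1 + (k + 1)) (n - (k + 1)) (k + 1) 0 1 0 1 p
    simp only [pow_zero, mul_one, pow_one, one_mul] at h0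
    rw [h0, if_pos (by omega)]
    congr 2
    rw [E_inj]; omega
  rw [h1, h2, CharTwo.add_self_eq_zero]

lemma lam_mon (T n m : ℕ) (hn : n < T) (hm : m < T) :
    lam T n (y 0 ^ (T - 1) * y 1 ^ (T - m - 1) * y 2 ^ m) = if n = m then 1 else 0 := by
  have h := mon_eq (T - 1) (T - m - 1) m 0
  rw [pow_zero, mul_one] at h
  rw [h, lam, Finset.sum_range_succ', Finset.sum_eq_zero, zero_add]
  · rw [MvPowerSeries.coeff_monomial]
    refine if_congr ?_ rfl rfl
    rw [E_inj]
    omega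
  · intro k hk
    rw [Finset.mem_range] at hk
    rw [MvPowerSeries.coeff_monomial, if_neg]
    rw [E_inj]; omega

/-! ### Regularity and syzygies in `B` -/

/-- The image of the variable `y i` in `B`. -/
def z (i : Fin 4) : B := Ideal.Quotient.mk _ (y i)

lemma mk_eq_zero {p : P} : (Ideal.Quotient.mk (Ideal.span {y 0 * y 2 + y 1 * y 3}) p = 0) ↔
    (y 0 * y 2 + y 1 * y 3) ∣ p := by
  rw [Ideal.Quotient.eq_zero_iff_mem, Ideal.mem_span_singleton]

lemma J_eq : J = Ideal.span {z 0, z 1} := rfl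

lemma z_rel : z 0 * z 2 = - (z 1 * z 3) := by
  rw [eq_neg_iff_add_eq_zero]
  exact mk_eq_zero.2 dvd_rfl

/-- The fractions `y₃^n / (y₁ y₂^(n+1))` are pairwise distinct in the Čech description of
`H²_{(y₁,y₂)}(B)`: clearing denominators at level `T` gives elements that stay different modulo
`(y₁^T, y₂^T)`. -/
lemma not_mem {T n m : ℕ} (hn : n < T) (hm : m < T) (hnm : n ≠ m) :
    z 0 ^ (T - 1) * z 1 ^ (T - n - 1) * z 2 ^ n - z 0 ^ (T - 1) * z 1 ^ (T - m - 1) * z 2 ^ m ∉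
      Ideal.span {z 0 ^ T, z 1 ^ T} := by
  intro h
  obtain ⟨p, q, h⟩ := Ideal.mem_span_pair.1 h
  simp only [z] at h
  obtain ⟨p, rfl⟩ := Ideal.Quotient.mk_surjective p
  obtain ⟨q, rfl⟩ := Ideal.Quotient.mk_surjective q
  have h0 : y 0 ^ (T - 1) * y 1 ^ (T - n - 1) * y 2 ^ n - (y 0 ^ (T - 1) * y 1 ^ (T - m - 1) * y 2 ^ m
      + y 0 ^ T * p + y 1 ^ T * q) ∈ Ideal.span {y 0 * y 2 + y 1 * y 3} := by
    rw [← Ideal.Quotient.eq_zero_iff_mem]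
    simp only [map_sub, map_add, map_mul, map_pow]
    linear_combination -h
  obtain ⟨r, hr⟩ := Ideal.mem_span_singleton.1 h0
  have h1 := congrArg (lam T n) (eq_add_of_sub_eq hr)
  simp only [lam_add, lam_x T n hn, lam_y T n hn, lam_f T n hn, lam_mon T n _ hn hm,
    lam_mon T n _ hn hn] at h1
  simp [hnm] at h1

open MvPowerSeries in
lemma dvd_of_dvd_mul {i j : Fin 4} (hij : i ≠ j) {c : P} (h : y i ∣ y j * c) : y i ∣ c := by
  unfold y at *
  rw [X_dvd_iff] at h ⊢
  intro m hm
  have := h (Finsupp.single j 1 + m) (by simp [hm, hij.symm])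
  rwa [X, coeff_add_monomial_mul, one_mul] at this

lemma y_ne_zero (i : Fin 4) : y i ≠ 0 := by
  intro h
  have := congrArg (MvPowerSeries.coeff (Finsupp.single i 1)) h
  simp [y] at this

lemma reg_one (a : B) (h : z 1 * a = 0) : a = 0 := by
  obtain ⟨g, rfl⟩ := Ideal.Quotient.mk_surjective a
  rw [z, ← map_mul, mk_eq_zero] at h
  obtain ⟨c, hc⟩ := h
  have h1 : y 1 ∣ y 0 * (y 2 * c) := ⟨g - y 3 * c, by linear_combination -hc⟩
  obtain ⟨c, rfl⟩ := dvd_of_dvd_mul (by decide) (dvd_of_dvd_mul (by decide) h1)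
  exact mk_eq_zero.2 ⟨c, mul_left_cancel₀ (y_ne_zero 1) (by rw [hc]; ring)⟩

lemma reg_pow (k : ℕ) (a : B) (h : z 1 ^ k * a = 0) : a = 0 := by
  induction k with
  | zero => simpa using h
  | succ k ih => exact ih (reg_one _ (by rw [← h]; ring))

open MvPowerSeries in
/-- Division by a variable, with the remainder free of that variable. -/
lemma split (s : Fin 4) (c : P) : ∃ d e : P, c = y s * d + e ∧
    ∀ m, coeff m e = if m s = 0 then coeff m c else 0 := by
  let e : P := fun m => if m s = 0 then coeff m c else 0
  have he : ∀ m, coeff m e = if m s = 0 then coeff m c else 0 := fun m => rfl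
  obtain ⟨d, hd⟩ : y s ∣ c - e := by
    unfold y
    rw [X_dvd_iff]
    intro m hm
    rw [map_sub, he, if_pos hm, sub_self]
  exact ⟨d, e, by rw [← hd]; ring, he⟩

open MvPowerSeries in
lemma coeff_y_mul_of_eq_zero {s : Fin 4} {m : Fin 4 →₀ ℕ} (hm : m s = 0) (d : P) :
    coeff m (y s * d) = 0 :=
  X_dvd_iff.1 (Dvd.intro d rfl) m hm

open MvPowerSeries in
/-- The variable `y₄` is regular modulo `(y₁, y₂)`. -/
lemma mem_of_mul {c p q : P} (h : y 3 * c = y 0 * p + y 1 * q) : ∃ p q, c = y 0 * p + y 1 * q := by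
  obtain ⟨d, e, rfl, he⟩ := split 0 c
  obtain ⟨d', e', rfl, he'⟩ := split 1 e
  -- The remainder involves neither `y₁` nor `y₂`, while `y₄` times it lies in `(y₁, y₂)`.
  have : e' = 0 := by
    ext m
    rw [map_zero, he']
    split_ifs with h1
    · rw [he]
      split_ifs with h0
      · have h2 := congrArg (coeff (Finsupp.single 3 1 + m)) h
        rwa [map_add, coeff_y_mul_of_eq_zero (s := 0) (by simp [h0]),
          coeff_y_mul_of_eq_zero (s := 1) (by simp [h1]),
          show y 3 = monomial (Finsupp.single 3 1) 1 from rfl, coeff_add_monomial_mul, one_mul,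
          add_zero] at h2
      · rfl
    · rfl
  exact ⟨d, d', by rw [this]; ring⟩

lemma syz_two {a b : B} (h : z 0 * a + z 1 ^ 2 * b = 0) : ∃ a', a = z 1 * a' := by
  obtain ⟨a, rfl⟩ := Ideal.Quotient.mk_surjective a
  obtain ⟨b, rfl⟩ := Ideal.Quotient.mk_surjective b
  rw [z, z, ← map_mul, ← map_pow, ← map_mul, ← map_add, mk_eq_zero] at h
  obtain ⟨c, hc⟩ := h
  obtain ⟨d, hd⟩ : y 1 ∣ a - y 2 * c := dvd_of_dvd_mul (j := 0) (by decide)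
    ⟨y 3 * c - y 1 * b, by linear_combination hc⟩
  have h1 : y 0 * d = y 3 * c - y 1 * b := mul_left_cancel₀ (y_ne_zero 1) (by
    linear_combination hc - y 0 * hd)
  obtain ⟨p, q, rfl⟩ := mem_of_mul (c := c) (p := d) (q := b) (by linear_combination -h1)
  refine ⟨Ideal.Quotient.mk _ (d - y 3 * p + y 2 * q), ?_⟩
  rw [z, ← map_mul, ← sub_eq_zero, ← map_sub, mk_eq_zero]
  exact ⟨p, by linear_combination hd⟩

/-- In a relation `y₁ a + y₂^(k+1) b = 0` in `B`, the coefficient `a` is divisible by `y₂^k`. -/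
lemma syz (k : ℕ) {a b : B} (h : z 0 * a + z 1 ^ (k + 1) * b = 0) : ∃ a', a = z 1 ^ k * a' := by
  induction k generalizing b with
  | zero => exact ⟨a, by simp⟩
  | succ k ih =>
    obtain ⟨a', rfl⟩ := ih (b := z 1 * b) (by rw [← h]; ring)
    obtain ⟨a'', rfl⟩ := syz_two (a := a') (b := b) (reg_pow k _ (by rw [← h]; ring))
    exact ⟨a'', by ring⟩

end Hartshorne

namespace Hartshorne
open ExtRep

/-! ### The homomorphisms giving rise to the socle elements -/

/-- A map `G` vanishing on the kernel of `F` factors through any submodule of the range of `F`. -/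
lemma exists_descend {R A X Q : Type*} [CommRing R] [AddCommGroup A] [Module R A]
    [AddCommGroup X] [Module R X] [AddCommGroup Q] [Module R Q] (F : A →ₗ[R] X) (G : A →ₗ[R] Q)
    (hFG : ∀ a, F a = 0 → G a = 0) (I : Submodule R X) (hI : ∀ x ∈ I, ∃ a, F a = x) :
    ∃ h : I →ₗ[R] Q, ∀ a (ha : F a ∈ I), h ⟨F a, ha⟩ = G a := by
  have hle : LinearMap.ker F ≤ LinearMap.ker G := fun a ha => hFG a ha
  let h₁ := (Submodule.liftQ (LinearMap.ker F) G hle) ∘ₗ F.quotKerEquivRange.symm.toLinearMap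
  refine ⟨h₁ ∘ₗ Submodule.inclusion (fun x hx => LinearMap.mem_range.2 (hI x hx)), fun a ha => ?_⟩
  have : F.quotKerEquivRange.symm ⟨F a, LinearMap.mem_range_self F a⟩ = Submodule.Quotient.mk a := by
    rw [LinearEquiv.symm_apply_eq]
    rfl
  change Submodule.liftQ (LinearMap.ker F) G hle
    (F.quotKerEquivRange.symm ⟨F a, LinearMap.mem_range_self F a⟩) = G a
  rw [this]
  rfl

/-- The linear map `(a, b) ↦ p a + q b`. -/
def lin (p q : B) : B × B →ₗ[B] B :=
  (LinearMap.mulLeft B p).coprod (LinearMap.mulLeft B q)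

lemma lin_apply (p q : B) (a : B × B) : lin p q a = p * a.1 + q * a.2 := rfl

lemma mem_J_pow (k : ℕ) {j : B} (hj : j ∈ J ^ (k + k)) : ∃ a b, j = z 0 ^ k * a + z 1 ^ k * b := by
  have h1 : J = Ideal.span {z 0} ⊔ Ideal.span {z 1} := by
    rw [J_eq, Ideal.span_insert]
  rw [h1] at hj
  have h2 := Ideal.sup_pow_add_le_pow_sup_pow hj
  rw [Ideal.span_singleton_pow, Ideal.span_singleton_pow, ← Ideal.span_insert] at h2
  obtain ⟨a, b, h⟩ := Ideal.mem_span_pair.1 h2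
  exact ⟨a, b, by rw [← h]; ring⟩

/-- The power `J^(2n+4)`. It is contained in `(y₁^(n+2), y₂^(n+2))`, which leaves enough room for
`exists_h` and `exists_g`. -/
abbrev I (n : ℕ) : Ideal B := J ^ ((n + 2) + (n + 2))

lemma mem_I {n : ℕ} {j : B} (hj : j ∈ I n) :
    ∃ a b, j = z 0 * (z 0 ^ (n + 1) * a) + z 1 ^ (n + 2) * b := by
  obtain ⟨a, b, rfl⟩ := mem_J_pow _ hj
  exact ⟨a, b, by ring⟩

/-- The homomorphism `y₁ a + y₂^(n+2) b ↦ y₃^n a` from `J^(2n+4)` to `B/(y₂^(n+1))`. -/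
lemma exists_h (n : ℕ) : ∃ h : I n →ₗ[B] B ⧸ Ideal.span {z 1 ^ (n + 1)},
    ∀ a b (hab : z 0 * a + z 1 ^ (n + 2) * b ∈ I n),
      h ⟨_, hab⟩ = Ideal.Quotient.mk _ (z 2 ^ n * a) := by
  obtain ⟨h, hh⟩ := exists_descend (lin (z 0) (z 1 ^ (n + 2)))
    (Submodule.mkQ (Ideal.span {z 1 ^ (n + 1)}) ∘ₗ lin (z 2 ^ n) 0) (by
      intro a ha
      obtain ⟨a', ha'⟩ := syz (n + 1) ha
      refine (Ideal.Quotient.eq_zero_iff_mem).2 (Ideal.mem_span_singleton'.2 ⟨z 2 ^ n * a', ?_⟩)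
      change _ = z 2 ^ n * a.1 + 0 * a.2
      rw [show a.1 = z 1 ^ (n + 1) * a' from ha']
      ring) (I n) (by
      intro j hj
      obtain ⟨a, b, rfl⟩ := mem_I hj
      exact ⟨(_, _), rfl⟩)
  refine ⟨h, fun a b hab => (hh (a, b) hab).trans ?_⟩
  change Ideal.Quotient.mk _ (z 2 ^ n * a + 0 * b) = _
  rw [zero_mul, add_zero]

/-- Each variable times the homomorphism of `exists_h` lifts to a homomorphism with values in `B`:
for `y₁` to multiplication by `y₃^n`, for `y₂` and `y₃` to zero, and for `y₄` to
`y₁ a + y₂^(n+2) b ↦ y₃^n y₄ a - y₂^(n+1) y₃^(n+1) b`. -/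
lemma exists_g (n : ℕ) (h : I n →ₗ[B] B ⧸ Ideal.span {z 1 ^ (n + 1)})
    (hh : ∀ a b (hab : z 0 * a + z 1 ^ (n + 2) * b ∈ I n),
      h ⟨_, hab⟩ = Ideal.Quotient.mk _ (z 2 ^ n * a)) (i : Fin 4) :
    ∃ g : I n →ₗ[B] B, ∀ x, z i • h x = Ideal.Quotient.mk _ (g x) := by
  have sm : ∀ r s : B, r • Ideal.Quotient.mk (Ideal.span {z 1 ^ (n + 1)}) s =
    Ideal.Quotient.mk _ (r * s) := fun r s => rfl
  fin_cases i
  · refine ⟨(LinearMap.mulLeft B (z 2 ^ n)) ∘ₗ (I n).subtype, ?_⟩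
    rintro ⟨j, hj⟩
    obtain ⟨a, b, rfl⟩ := mem_I hj
    rw [hh, sm, Ideal.Quotient.eq, Ideal.mem_span_singleton']
    refine ⟨- (z 2 ^ n * z 1 * b), ?_⟩
    simp only [LinearMap.comp_apply, LinearMap.mulLeft_apply, Submodule.subtype_apply, Fin.zero_eta]
    ring
  · refine ⟨0, ?_⟩
    rintro ⟨j, hj⟩
    obtain ⟨a, b, rfl⟩ := mem_I hj
    rw [hh, sm, Ideal.Quotient.eq, Ideal.mem_span_singleton']
    refine ⟨z 0 * (-z 3) ^ n * a, ?_⟩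
    have : (z 0 * z 2) ^ n = (-(z 1 * z 3)) ^ n := by rw [z_rel]
    simp only [LinearMap.zero_apply, Fin.mk_one]
    linear_combination - z 1 * z 0 * a * this
  · refine ⟨0, ?_⟩
    rintro ⟨j, hj⟩
    obtain ⟨a, b, rfl⟩ := mem_I hj
    rw [hh, sm, Ideal.Quotient.eq, Ideal.mem_span_singleton']
    refine ⟨(-z 3) ^ (n + 1) * a, ?_⟩
    have : (z 0 * z 2) ^ (n + 1) = (-(z 1 * z 3)) ^ (n + 1) := by rw [z_rel]
    simp only [LinearMap.zero_apply, Fin.reduceFinMk]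
    linear_combination - a * this
  · obtain ⟨g, hg⟩ := exists_descend (lin (z 0) (z 1 ^ (n + 2)))
      (lin (z 3 * z 2 ^ n) (- (z 2 ^ (n + 1) * z 1 ^ (n + 1)))) (by
        intro a ha
        -- Multiplied by `y₂`, the proposed map is `- y₃^(n+1)` times `y₁ a + y₂^(n+2) b`.
        refine reg_one _ ?_
        rw [lin_apply] at ha ⊢
        linear_combination (-z 2 ^ (n + 1)) * ha + z 2 ^ n * a.1 * z_rel) (I n) (by
        intro j hj
        obtain ⟨a, b, rfl⟩ := mem_I hj
        exact ⟨(_, _), rfl⟩)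
    refine ⟨g, ?_⟩
    rintro ⟨j, hj⟩
    obtain ⟨a, b, rfl⟩ := mem_I hj
    have := hg (z 0 ^ (n + 1) * a, b) hj
    simp only [lin_apply] at this
    rw [hh, this, sm, Ideal.Quotient.eq, Ideal.mem_span_singleton']
    refine ⟨z 2 ^ (n + 1) * b, ?_⟩
    simp only [Fin.reduceFinMk]
    ring

/-- There are infinitely many elements of `H²_{(y₁,y₂)}(B)` killed by all variables. In the Čech
description, the `n`-th one is, up to sign, the class of `y₃^n / (y₁ y₂^(n+1))`. -/
lemma exists_socle : ∃ s : ℕ → M, Function.Injective s ∧ ∀ n i, z i • s n = 0 := by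
  obtain ⟨ι, hι⟩ := exists_stage_maps J (ModuleCat.of B B)
  choose h hh using exists_h
  choose e he using fun n => exists_isConn (reg_pow (n + 1)) (h n)
  refine ⟨fun n => ι _ (e n), fun n m hnm => ?_, fun n i => ?_⟩
  · by_contra hne
    obtain ⟨T, ht, ht', hee⟩ := hι _ _ _ _ hnm
    have z0J : z 0 ∈ J := Ideal.subset_span (by simp [z])
    have z1J : z 1 ∈ J := Ideal.subset_span (by simp [z])
    have hh' : ∀ k j a b (H : j ∈ I k), j = z 0 * a + z 1 ^ (k + 2) * b →
        h k ⟨j, H⟩ = Ideal.Quotient.mk _ (z 2 ^ k * a) := by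
      rintro k _ a b H rfl
      exact hh k a b H
    have hx : ∀ k, (k + 2) + (k + 2) ≤ T → ∀ H, h k ⟨z 0 ^ T, H⟩ =
        Ideal.Quotient.mk _ (z 2 ^ k * z 0 ^ (T - 1)) := by
      intro k hk H
      have e1 : z 0 ^ T = z 0 * z 0 ^ (T - 1) + z 1 ^ (k + 2) * 0 := by
        rw [mul_zero, add_zero, ← pow_succ']; congr 1; omega
      exact hh' k _ _ _ H e1
    have hy : ∀ k, (k + 2) + (k + 2) ≤ T → ∀ H, h k ⟨z 1 ^ T, H⟩ = 0 := by
      intro k hk H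
      have e1 : z 1 ^ T = z 0 * 0 + z 1 ^ (k + 2) * z 1 ^ (T - (k + 2)) := by
        rw [mul_zero, zero_add, ← pow_add]; congr 1; omega
      rw [hh' k _ _ _ H e1, mul_zero, map_zero]
    have hb : ∀ k, (k + 2) + (k + 2) ≤ T → z 1 ^ T = z 1 ^ (k + 1) * z 1 ^ (T - k - 1) := by
      intro k hk
      rw [← pow_add]; congr 1; omega
    have hj : ∀ k, (k + 2) + (k + 2) ≤ T → ∀ j ∈ I k,
        j * (z 2 ^ k * z 0 ^ (T - 1) * z 1 ^ (T - k - 1)) ∈ Ideal.span {z 0 ^ T, z 1 ^ T} := by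
      intro k hk j hj
      obtain ⟨a, b, rfl⟩ := mem_I hj
      refine Ideal.mem_span_pair.2 ⟨z 0 ^ (k + 1) * a * z 2 ^ k * z 1 ^ (T - k - 1),
        z 1 * b * z 2 ^ k * z 0 ^ (T - 1), ?_⟩
      have e1 : z 0 ^ T = z 0 * z 0 ^ (T - 1) := by
        rw [← pow_succ']; congr 1; omega
      rw [e1, hb k hk]
      ring
    have key := (he n).mem_of_eq ht ht' (reg_pow _) (reg_pow _) (he m) hee
      (Ideal.pow_mem_pow z0J T) (Ideal.pow_mem_pow z1J T) (hb n ht) (hb m ht')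
      (hx n ht _) (hx m ht' _) (hy n ht _) (hy m ht' _) (hj n ht) (hj m ht')
    refine not_mem (T := T) (n := n) (m := m) (by omega) (by omega) hne ?_
    convert key using 1
    ring
  · obtain ⟨g, hg⟩ := exists_g n (h n) (hh n) i
    have := (he n).smul_eq_zero (reg_pow _) (z i) g hg
    refine (map_smul (ι _) (z i) (e n)).symm.trans ?_
    rw [this, map_zero]
    rfl

/-! ### The maximal ideal and the residue field -/

/-- The constant term of an element of `B`. -/
def ε : B →+* ZMod 2 :=
  Ideal.Quotient.lift _ (MvPowerSeries.constantCoeff (σ := Fin 4) (R := ZMod 2)) (by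
    intro a ha
    obtain ⟨b, rfl⟩ := Ideal.mem_span_singleton'.1 ha
    simp [y])

lemma ε_z (i : Fin 4) : ε (z i) = 0 := by
  change MvPowerSeries.constantCoeff (y i) = 0
  simp [y]

/-- Every element of `B` is its constant term plus a combination of the variables. -/
lemma exists_sum (r : B) :
    ∃ d : Fin 4 → B, r = algebraMap (ZMod 2) B (ε r) + ∑ i, d i * z i := by
  obtain ⟨p, rfl⟩ := Ideal.Quotient.mk_surjective r
  obtain ⟨d₀, e₀, h₀, he₀⟩ := split 0 p
  obtain ⟨d₁, e₁, rfl, he₁⟩ := split 1 e₀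
  obtain ⟨d₂, e₂, rfl, he₂⟩ := split 2 e₁
  obtain ⟨d₃, e₃, rfl, he₃⟩ := split 3 e₂
  have : e₃ = MvPowerSeries.C (MvPowerSeries.constantCoeff p) := by
    ext m
    rw [MvPowerSeries.coeff_C]
    split_ifs with hm
    · subst hm
      rw [he₃, he₂, he₁, he₀]
      simp
    · rw [he₃, he₂, he₁, he₀]
      split_ifs with h3 h2 h1 h0 <;> try rfl
      exact absurd (Finsupp.ext fun i => by fin_cases i <;> simp [*]) hm
  refine ⟨![Ideal.Quotient.mk _ d₀, Ideal.Quotient.mk _ d₁, Ideal.Quotient.mk _ d₂,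
    Ideal.Quotient.mk _ d₃], ?_⟩
  have h1 : algebraMap (ZMod 2) B (ε (Ideal.Quotient.mk _ p)) = Ideal.Quotient.mk _ e₃ := by
    rw [this]; rfl
  rw [h1, h₀]
  simp only [Fin.sum_univ_four, map_add, map_mul, z]
  simp
  ring

lemma eq_ker (𝔪 : Ideal B) (h𝔪 : 𝔪.IsMaximal) : 𝔪 = RingHom.ker ε := by
  refine h𝔪.eq_of_le (RingHom.ker_ne_top ε) fun r hr => ?_
  rw [RingHom.mem_ker]
  by_contra h
  obtain ⟨p, rfl⟩ := Ideal.Quotient.mk_surjective r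
  have : IsUnit p := MvPowerSeries.isUnit_iff_constantCoeff.2 (isUnit_iff_ne_zero.2 h)
  exact h𝔪.ne_top (Ideal.eq_top_of_isUnit_mem _ hr (this.map _))

end Hartshorne

/-- The socle of `H²_{(y₁,y₂)}(B)` is infinite dimensional over the residue field `𝔽₂`. -/
theorem socle_H2_infinite_dimensional (𝔪 : Ideal B) (h𝔪 : 𝔪.IsMaximal) :
    ¬ (Submodule.torsionBySet B M (𝔪 : Set B)).FG := by
  open Hartshorne in
  intro hFG
  have hker := eq_ker 𝔪 h𝔪
  obtain ⟨s, hs, hz⟩ := exists_socle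
  have hmem : ∀ n, s n ∈ Submodule.torsionBySet B M (𝔪 : Set B) := by
    intro n
    rw [Submodule.mem_torsionBySet_iff]
    rintro ⟨r, hr⟩
    rw [hker] at hr
    obtain ⟨d, hd⟩ := exists_sum r
    rw [show ε r = 0 from hr, map_zero, zero_add] at hd
    change r • s n = 0
    rw [hd, Finset.sum_smul]
    exact Finset.sum_eq_zero fun i _ => by rw [mul_smul, hz, smul_zero]
  -- A finitely generated socle would be a finite-dimensional vector space over the finite field
  -- `B ⧸ 𝔪`, hence a finite set.
  have hfin : Finite (B ⧸ 𝔪) := by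
    refine Finite.of_surjective
      (fun a : ZMod 2 => Ideal.Quotient.mk 𝔪 (algebraMap (ZMod 2) B a)) fun r => ?_
    obtain ⟨r, rfl⟩ := Ideal.Quotient.mk_surjective r
    obtain ⟨d, hd⟩ := exists_sum r
    refine ⟨ε r, (Ideal.Quotient.eq.2 ?_).symm⟩
    have : r - algebraMap (ZMod 2) B (ε r) = ∑ i, d i * z i := sub_eq_of_eq_add' hd
    rw [this, hker]
    exact Ideal.sum_mem _ fun i _ => Ideal.mul_mem_left _ _ (ε_z i)
  have h1 : Module.Finite B (Submodule.torsionBySet B M (𝔪 : Set B)) := Module.Finite.iff_fg.2 hFG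
  have h2 : Module.Finite (B ⧸ 𝔪) (Submodule.torsionBySet B M (𝔪 : Set B)) :=
    Module.Finite.of_restrictScalars_finite B _ _
  have h3 : Finite (Submodule.torsionBySet B M (𝔪 : Set B)) := Module.finite_of_finite (B ⧸ 𝔪)
  have h4 : Function.Injective (fun n => (⟨s n, hmem n⟩ : Submodule.torsionBySet B M (𝔪 : Set B))) :=
    fun n m h => hs (congrArg Subtype.val h)
  exact not_finite_iff_infinite.2 (Infinite.of_injective _ h4) h3
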